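/- Let J ∈ Γ_0(ℝ^n), x ∈ ℝ^n, t > 0, ε > 0. Let u_MAP = argmin_{u} {J(u) + (1/(2t))‖x−u‖²} and let u_PM = (∫ u e^{−(J(u)+(1/(2t))‖x−u‖²)/ε} du)/(∫ e^{−(J(u)+(1/(2t))‖x−u‖²)/ε} du), assuming the integrals are finite. Then ‖u_PM − u_MAP‖² ≤ n t ε. -/

import Mathlib

open MeasureTheory

/-!
Let `m` minimize a `κ`-strongly convex `F` in dimension `n`. Strong convexity gives
`F (m + s • w) ≤ F (m + w) - κ / 2 * (1 - s²) ‖w‖²` for `0 < s < 1`, so the weight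
`f w = exp (-F (m + w) / ε)` satisfies `f w (1 + κ / (2ε) * (1 - s²) ‖w‖²) ≤ f (s • w)`. After
integration the right side becomes `s⁻ⁿ ∫ f` by the change of variables `w ↦ s • w`, and letting
`s → 1` yields the second moment bound `κ ∫ f ‖w‖² ≤ n ε ∫ f`. Jensen's inequality turns it into a
bound for the mean. The function `J + ‖x - ·‖² / (2t)` is `1 / t`-strongly convex.
-/

open Set Filter Topology Module

section StrongConvexity

variable {E : Type*} [NormedAddCommGroup E] [NormedSpace ℝ E]
  {S : Set E} {F : E → ℝ} {κ s : ℝ} {m w : E}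

lemma strongConvexOn_apply_add_smul_le (hF : StrongConvexOn S κ F) (hm : m ∈ S) (hw : m + w ∈ S)
    (hs₀ : 0 ≤ s) (hs₁ : s ≤ 1) :
    F (m + s • w) ≤ (1 - s) * F m + s * F (m + w) - (1 - s) * s * (κ / 2 * ‖w‖ ^ 2) := by
  have h := hF.2 hm hw (sub_nonneg.2 hs₁) hs₀ (sub_add_cancel 1 s)
  rwa [show (1 - s) • m + s • (m + w) = m + s • w by module, sub_add_cancel_left, norm_neg] at h

lemma add_sq_norm_le_of_isMinOn (hF : StrongConvexOn S κ F) (hm : m ∈ S) (hmin : IsMinOn F S m)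
    (hw : m + w ∈ S) : F m + κ / 2 * ‖w‖ ^ 2 ≤ F (m + w) := by
  have hlim : Tendsto (fun s : ℝ => F m + (1 - s) * (κ / 2 * ‖w‖ ^ 2)) (𝓝[>] 0)
      (𝓝 (F m + κ / 2 * ‖w‖ ^ 2)) := by
    refine tendsto_nhdsWithin_of_tendsto_nhds (Continuous.tendsto' (by fun_prop) _ _ ?_)
    rw [sub_zero, one_mul]
  refine le_of_tendsto hlim ?_
  filter_upwards [Ioo_mem_nhdsGT one_pos] with s hs
  have hmem : m + s • w ∈ S := hF.1.add_smul_mem hm hw ⟨hs.1.le, hs.2.le⟩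
  have hle := (hmin hmem).trans (strongConvexOn_apply_add_smul_le hF hm hw hs.1.le hs.2.le)
  refine le_of_mul_le_mul_left ?_ hs.1
  linarith

lemma add_one_sub_sq_mul_sq_norm_le_of_isMinOn (hF : StrongConvexOn S κ F) (hm : m ∈ S)
    (hmin : IsMinOn F S m) (hw : m + w ∈ S) (hs₀ : 0 ≤ s) (hs₁ : s ≤ 1) :
    F (m + s • w) + κ / 2 * (1 - s ^ 2) * ‖w‖ ^ 2 ≤ F (m + w) := by
  have hchord := strongConvexOn_apply_add_smul_le hF hm hw hs₀ hs₁
  have hgrowth := mul_le_mul_of_nonneg_left (add_sq_norm_le_of_isMinOn hF hm hmin hw)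
    (sub_nonneg.2 hs₁)
  linarith

end StrongConvexity

section GibbsWeight

variable {E : Type*}

/-- The unnormalized Gibbs density `e^{-F/ε}` of an energy `F` with domain `S` at temperature `ε`.
It vanishes outside `S`, which encodes `F = +∞` there. -/
noncomputable def gibbsWeight (S : Set E) (F : E → ℝ) (ε : ℝ) : E → ℝ :=
  S.indicator fun u => Real.exp (-F u / ε)

lemma gibbsWeight_nonneg (S : Set E) (F : E → ℝ) (ε : ℝ) (u : E) : 0 ≤ gibbsWeight S F ε u :=
  indicator_nonneg (fun _ _ => (Real.exp_pos _).le) u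

variable [NormedAddCommGroup E] [NormedSpace ℝ E] {S : Set E} {F : E → ℝ} {κ ε s : ℝ} {m : E}

lemma gibbsWeight_mul_le (hF : StrongConvexOn S κ F) (hε : 0 ≤ ε) (hm : m ∈ S)
    (hmin : IsMinOn F S m) (hs₀ : 0 ≤ s) (hs₁ : s ≤ 1) (w : E) :
    gibbsWeight S F ε (m + w) * (1 + κ / (2 * ε) * (1 - s ^ 2) * ‖w‖ ^ 2) ≤
      gibbsWeight S F ε (m + s • w) := by
  by_cases hw : m + w ∈ S
  · have hmem : m + s • w ∈ S := hF.1.add_smul_mem hm hw ⟨hs₀, hs₁⟩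
    have hdrop := add_one_sub_sq_mul_sq_norm_le_of_isMinOn hF hm hmin hw hs₀ hs₁
    set k := κ / 2 * (1 - s ^ 2) * ‖w‖ ^ 2 with hk
    rw [gibbsWeight, indicator_of_mem hw, indicator_of_mem hmem]
    calc Real.exp (-F (m + w) / ε) * (1 + κ / (2 * ε) * (1 - s ^ 2) * ‖w‖ ^ 2)
        = Real.exp (-F (m + w) / ε) * (k / ε + 1) := by rw [hk]; ring
      _ ≤ Real.exp (-F (m + w) / ε) * Real.exp (k / ε) := by
        gcongr; exact Real.add_one_le_exp _
      _ = Real.exp ((-F (m + w) + k) / ε) := by rw [← Real.exp_add, ← add_div]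
      _ ≤ Real.exp (-F (m + s • w) / ε) := by gcongr; linarith
  · rw [gibbsWeight, indicator_of_notMem hw, zero_mul]
    exact gibbsWeight_nonneg S F ε _

end GibbsWeight

section Scaling

lemma two_mul_le_of_pow_mul_le {n : ℕ} {A Z : ℝ}
    (h : ∀ s ∈ Ioo (0 : ℝ) 1, s ^ n * (Z + (1 - s ^ 2) * A) ≤ Z) : 2 * A ≤ n * Z := by
  have hleft : Tendsto (fun s : ℝ => s ^ n * ((1 + s) * A)) (𝓝[<] 1) (𝓝 (2 * A)) :=
    tendsto_nhdsWithin_of_tendsto_nhds <| Continuous.tendsto' (by fun_prop) _ _ (by norm_num)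
  have hright : Tendsto (fun s : ℝ => (∑ i ∈ Finset.range n, s ^ i) * Z) (𝓝[<] 1) (𝓝 (n * Z)) :=
    tendsto_nhdsWithin_of_tendsto_nhds <| Continuous.tendsto' (by fun_prop) _ _ (by simp)
  refine le_of_tendsto_of_tendsto hleft hright ?_
  filter_upwards [Ioo_mem_nhdsLT one_pos] with s hs
  refine le_of_mul_le_mul_left ?_ (sub_pos.2 hs.2)
  calc (1 - s) * (s ^ n * ((1 + s) * A)) = s ^ n * (Z + (1 - s ^ 2) * A) - s ^ n * Z := by ring
    _ ≤ (1 - s ^ n) * Z := by linarith [h s hs]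
    _ = (1 - s) * ((∑ i ∈ Finset.range n, s ^ i) * Z) := by rw [← mul_neg_geom_sum, mul_assoc]

variable {E : Type*} [NormedAddCommGroup E] [NormedSpace ℝ E] [FiniteDimensional ℝ E]
  [MeasurableSpace E] [BorelSpace E] {μ : Measure E} [μ.IsAddHaarMeasure] {f : E → ℝ} {c : ℝ}

lemma integrable_mul_sq_norm_of_scaling {s : ℝ} (hs : s ∈ Ioo 0 1) (hc : 0 < c)
    (hf₀ : ∀ w, 0 ≤ f w) (hf : Integrable f μ)
    (h : ∀ w, f w * (1 + c * (1 - s ^ 2) * ‖w‖ ^ 2) ≤ f (s • w)) :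
    Integrable (fun w => f w * ‖w‖ ^ 2) μ := by
  have hk : 0 < c * (1 - s ^ 2) :=
    mul_pos hc (sub_pos.2 (pow_lt_one₀ hs.1.le hs.2 two_ne_zero))
  have hdom : Integrable (fun w => (c * (1 - s ^ 2))⁻¹ * f (s • w)) μ :=
    (hf.comp_smul hs.1.ne').const_mul _
  refine hdom.mono' (hf.aestronglyMeasurable.mul (by fun_prop)) (ae_of_all _ fun w => ?_)
  rw [Real.norm_of_nonneg (mul_nonneg (hf₀ w) (sq_nonneg _)), inv_mul_eq_div, le_div_iff₀ hk]
  linarith [h w, hf₀ w]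

lemma two_mul_integral_mul_sq_norm_le_of_scaling (hf : Integrable f μ)
    (hf₂ : Integrable (fun w => f w * ‖w‖ ^ 2) μ)
    (h : ∀ s ∈ Ioo (0 : ℝ) 1, ∀ w, f w * (1 + c * (1 - s ^ 2) * ‖w‖ ^ 2) ≤ f (s • w)) :
    2 * (c * ∫ w, f w * ‖w‖ ^ 2 ∂μ) ≤ finrank ℝ E * ∫ w, f w ∂μ := by
  refine two_mul_le_of_pow_mul_le fun s hs => ?_
  have hpow : 0 < s ^ finrank ℝ E := pow_pos hs.1 _
  rw [← le_inv_mul_iff₀ hpow]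
  calc (∫ w, f w ∂μ) + (1 - s ^ 2) * (c * ∫ w, f w * ‖w‖ ^ 2 ∂μ)
      = ∫ w, f w + (1 - s ^ 2) * c * (f w * ‖w‖ ^ 2) ∂μ := by
        rw [integral_add hf (hf₂.const_mul _), integral_const_mul, mul_assoc]
    _ ≤ ∫ w, f (s • w) ∂μ := by
        refine integral_mono (hf.add (hf₂.const_mul _)) (hf.comp_smul hs.1.ne') fun w => ?_
        linarith [h s hs w]
    _ = (s ^ finrank ℝ E)⁻¹ * ∫ w, f w ∂μ := by
        rw [Measure.integral_comp_smul, abs_of_pos (inv_pos.2 hpow), smul_eq_mul]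

end Scaling

section WeightedMean

variable {α E : Type*} [MeasurableSpace α] {μ : Measure α} [NormedAddCommGroup E]
  [NormedSpace ℝ E] {f : α → ℝ} {g : α → E}

lemma integrable_smul_of_integrable_mul_sq_norm (hf₀ : ∀ a, 0 ≤ f a) (hf : Integrable f μ)
    (hg : AEStronglyMeasurable g μ) (hfg : Integrable (fun a => f a * ‖g a‖ ^ 2) μ) :
    Integrable (fun a => f a • g a) μ := by
  refine (hf.add hfg).mono' (hf.aestronglyMeasurable.smul hg) (ae_of_all _ fun a => ?_)
  rw [norm_smul, Real.norm_of_nonneg (hf₀ a)]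
  have hnorm : ‖g a‖ ≤ 1 + ‖g a‖ ^ 2 := by nlinarith [sq_nonneg (‖g a‖ - 1)]
  calc f a * ‖g a‖ ≤ f a * (1 + ‖g a‖ ^ 2) := mul_le_mul_of_nonneg_left hnorm (hf₀ a)
    _ = f a + f a * ‖g a‖ ^ 2 := by ring

lemma integral_withDensity_ofReal (hf₀ : ∀ a, 0 ≤ f a) (hf : AEMeasurable f μ) (g : α → E) :
    ∫ a, g a ∂(μ.withDensity fun a => ENNReal.ofReal (f a)) = ∫ a, f a • g a ∂μ := by
  rw [integral_withDensity_eq_integral_toReal_smul₀ hf.ennreal_ofReal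
    (ae_of_all _ fun _ => ENNReal.ofReal_lt_top)]
  simp only [ENNReal.toReal_ofReal (hf₀ _)]

lemma integrable_withDensity_ofReal_iff (hf₀ : ∀ a, 0 ≤ f a) (hf : AEMeasurable f μ) :
    Integrable g (μ.withDensity fun a => ENNReal.ofReal (f a)) ↔
      Integrable (fun a => f a • g a) μ := by
  rw [integrable_withDensity_iff_integrable_smul₀' hf.ennreal_ofReal
    (ae_of_all _ fun _ => ENNReal.ofReal_lt_top)]
  simp only [ENNReal.toReal_ofReal (hf₀ _)]

lemma map_weighted_mean_le_of_convexOn [CompleteSpace E] {G : E → ℝ} (hG : ConvexOn ℝ univ G)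
    (hGc : Continuous G) (hf₀ : ∀ a, 0 ≤ f a) (hf : Integrable f μ) (hfpos : 0 < ∫ a, f a ∂μ)
    (hfg : Integrable (fun a => f a • g a) μ) (hfG : Integrable (fun a => f a * G (g a)) μ) :
    G ((∫ a, f a ∂μ)⁻¹ • ∫ a, f a • g a ∂μ) ≤ (∫ a, f a ∂μ)⁻¹ * ∫ a, f a * G (g a) ∂μ := by
  set ν := μ.withDensity fun a => ENNReal.ofReal (f a)
  have hmass : ν.real univ = ∫ a, f a ∂μ := by
    simpa using integral_withDensity_ofReal hf₀ hf.aemeasurable fun _ => (1 : ℝ)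
  have : IsFiniteMeasure ν := isFiniteMeasure_withDensity_ofReal hf.2
  have : NeZero ν := ⟨fun hν => hfpos.ne' (by rw [← hmass, hν, measureReal_zero_apply])⟩
  have hJensen := hG.map_average_le hGc.continuousOn isClosed_univ (ae_of_all ν fun _ => mem_univ _)
    ((integrable_withDensity_ofReal_iff hf₀ hf.aemeasurable).2 hfg)
    ((integrable_withDensity_ofReal_iff hf₀ hf.aemeasurable).2 hfG)
  simpa only [average_eq, hmass, ν, integral_withDensity_ofReal hf₀ hf.aemeasurable,
    smul_eq_mul] using hJensen

end WeightedMean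

section GibbsMean

variable {E : Type*} [NormedAddCommGroup E] [NormedSpace ℝ E] [FiniteDimensional ℝ E]
  [MeasurableSpace E] [BorelSpace E] {μ : Measure E} [μ.IsAddHaarMeasure]
  {S : Set E} {F : E → ℝ} {κ ε : ℝ} {m : E}

lemma integrable_gibbsWeight_mul_sq_norm_sub (hF : StrongConvexOn S κ F) (hκ : 0 < κ) (hε : 0 < ε)
    (hm : m ∈ S) (hmin : IsMinOn F S m) (hint : Integrable (gibbsWeight S F ε) μ) :
    Integrable (fun u => gibbsWeight S F ε u * ‖u - m‖ ^ 2) μ := by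
  have h : Integrable (fun w => gibbsWeight S F ε (m + w) * ‖w‖ ^ 2) μ :=
    integrable_mul_sq_norm_of_scaling (s := 2⁻¹) (by norm_num) (by positivity)
      (fun w => gibbsWeight_nonneg S F ε (m + w)) (hint.comp_add_left m)
      (gibbsWeight_mul_le hF hε.le hm hmin (by norm_num) (by norm_num))
  simpa only [add_sub_cancel] using h.comp_sub_right m

theorem integral_gibbsWeight_mul_sq_norm_sub_le (hF : StrongConvexOn S κ F) (hκ : 0 < κ)
    (hε : 0 < ε) (hm : m ∈ S) (hmin : IsMinOn F S m) (hint : Integrable (gibbsWeight S F ε) μ) :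
    ∫ u, gibbsWeight S F ε u * ‖u - m‖ ^ 2 ∂μ ≤
      finrank ℝ E * (ε / κ) * ∫ u, gibbsWeight S F ε u ∂μ := by
  have hint₂ : Integrable (fun w => gibbsWeight S F ε (m + w) * ‖w‖ ^ 2) μ := by
    simpa only [add_sub_cancel_left] using
      (integrable_gibbsWeight_mul_sq_norm_sub hF hκ hε hm hmin hint).comp_add_left m
  have hmoment := two_mul_integral_mul_sq_norm_le_of_scaling (hint.comp_add_left m) hint₂
    fun s hs => gibbsWeight_mul_le hF hε.le hm hmin hs.1.le hs.2.le
  rw [integral_add_left_eq_self] at hmoment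
  calc ∫ u, gibbsWeight S F ε u * ‖u - m‖ ^ 2 ∂μ
      = ∫ w, gibbsWeight S F ε (m + w) * ‖w‖ ^ 2 ∂μ := by
        rw [← integral_add_left_eq_self _ m]
        simp only [add_sub_cancel_left]
    _ = ε / κ * (2 * (κ / (2 * ε) * ∫ w, gibbsWeight S F ε (m + w) * ‖w‖ ^ 2 ∂μ)) := by
        field_simp
    _ ≤ ε / κ * (finrank ℝ E * ∫ u, gibbsWeight S F ε u ∂μ) := by gcongr
    _ = finrank ℝ E * (ε / κ) * ∫ u, gibbsWeight S F ε u ∂μ := by ring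

theorem sq_norm_gibbs_mean_sub_le (hF : StrongConvexOn S κ F) (hκ : 0 < κ) (hε : 0 < ε)
    (hm : m ∈ S) (hmin : IsMinOn F S m) (hint : Integrable (gibbsWeight S F ε) μ)
    (hpos : 0 < ∫ u, gibbsWeight S F ε u ∂μ) :
    ‖(∫ u, gibbsWeight S F ε u ∂μ)⁻¹ • (∫ u, gibbsWeight S F ε u • u ∂μ) - m‖ ^ 2 ≤
      finrank ℝ E * (ε / κ) := by
  have hint₂ := integrable_gibbsWeight_mul_sq_norm_sub hF hκ hε hm hmin hint
  have hint₁ : Integrable (fun u => gibbsWeight S F ε u • u) μ := by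
    have h := integrable_smul_of_integrable_mul_sq_norm (gibbsWeight_nonneg S F ε) hint
      (by fun_prop) hint₂
    refine (h.add (hint.smul_const m)).congr (ae_of_all _ fun u => ?_)
    simp only [Pi.add_apply, ← smul_add, sub_add_cancel]
  have hconvex : ConvexOn ℝ univ fun u : E => ‖u - m‖ ^ 2 := by
    simp only [← dist_eq_norm]
    exact (convexOn_univ_dist m).pow (fun _ _ => dist_nonneg) 2
  calc _ ≤ (∫ u, gibbsWeight S F ε u ∂μ)⁻¹ * ∫ u, gibbsWeight S F ε u * ‖u - m‖ ^ 2 ∂μ :=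
        map_weighted_mean_le_of_convexOn hconvex (by fun_prop) (gibbsWeight_nonneg S F ε) hint hpos
          hint₁ hint₂
    _ ≤ finrank ℝ E * (ε / κ) := by
        rw [inv_mul_le_iff₀ hpos, mul_comm]
        exact integral_gibbsWeight_mul_sq_norm_sub_le hF hκ hε hm hmin hint

end GibbsMean

section ExtendedReal

lemma convexOn_toReal {E : Type*} [AddCommGroup E] [Module ℝ E] {J : E → EReal}
    (hbot : ∀ u, J u ≠ ⊥)
    (hconv : ∀ u v : E, ∀ a b : ℝ, 0 ≤ a → 0 ≤ b → a + b = 1 →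
      J (a • u + b • v) ≤ (a : EReal) * J u + (b : EReal) * J v) :
    ConvexOn ℝ {u | J u ≠ ⊤} fun u => (J u).toReal := by
  have hle : ∀ ⦃u⦄, J u ≠ ⊤ → ∀ ⦃v⦄, J v ≠ ⊤ → ∀ ⦃a b : ℝ⦄, 0 ≤ a → 0 ≤ b → a + b = 1 →
      J (a • u + b • v) ≤ ((a * (J u).toReal + b * (J v).toReal : ℝ) : EReal) := by
    intro u hu v hv a b ha hb hab
    have h := hconv u v a b ha hb hab
    rw [← EReal.coe_toReal hu (hbot u), ← EReal.coe_toReal hv (hbot v)] at h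
    exact_mod_cast h
  refine ⟨fun u hu v hv a b ha hb hab => ?_, fun u hu v hv a b ha hb hab => ?_⟩
  · exact ne_top_of_le_ne_top (EReal.coe_ne_top _) (hle hu hv ha hb hab)
  · exact EReal.toReal_le_toReal (hle hu hv ha hb hab) (hbot _) (EReal.coe_ne_top _)

variable {α : Type*} {J : α → EReal} {q : α → ℝ} {m : α}

lemma ne_top_of_forall_add_coe_le (hmin : ∀ v, J m + q m ≤ J v + q v) (hproper : ∃ v, J v ≠ ⊤) :
    J m ≠ ⊤ := by
  intro hm
  obtain ⟨v, hv⟩ := hproper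
  have h := hmin v
  rw [hm, EReal.top_add_coe, top_le_iff] at h
  exact EReal.add_ne_top hv (EReal.coe_ne_top _) h

lemma isMinOn_toReal_add (hbot : ∀ u, J u ≠ ⊥) (hmin : ∀ v, J m + q m ≤ J v + q v)
    (hm : J m ≠ ⊤) : IsMinOn (fun u => (J u).toReal + q u) {u | J u ≠ ⊤} m := by
  intro v hv
  have h := hmin v
  rw [← EReal.coe_toReal hm (hbot m), ← EReal.coe_toReal hv (hbot v)] at h
  exact_mod_cast h

end ExtendedReal

section PosteriorMean

variable {E : Type*} [NormedAddCommGroup E] [InnerProductSpace ℝ E]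

lemma strongConvexOn_add_sq_norm_sub {S : Set E} {f : E → ℝ} (hf : ConvexOn ℝ S f) (κ : ℝ) (x : E) :
    StrongConvexOn S κ fun u => f u + κ / 2 * ‖x - u‖ ^ 2 := by
  have hlinear : ConvexOn ℝ S fun u => -κ * inner ℝ x u :=
    ((-κ) • (innerSL ℝ x).toLinearMap).convexOn hf.1
  refine strongConvexOn_iff_convex.2 (((hf.add hlinear).add_const (κ / 2 * ‖x‖ ^ 2)).congr ?_)
  intro u _
  simp only [Pi.add_apply, norm_sub_sq_real]
  ring

theorem stmt16_general [FiniteDimensional ℝ E] [MeasurableSpace E] [BorelSpace E]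
    {μ : Measure E} [μ.IsAddHaarMeasure] {t ε : ℝ} (ht : 0 < t) (hε : 0 < ε) {J : E → EReal}
    (hnobot : ∀ u, J u ≠ ⊥)
    (hconv : ∀ u v : E, ∀ a b : ℝ, 0 ≤ a → 0 ≤ b → a + b = 1 →
      J (a • u + b • v) ≤ (a : EReal) * J u + (b : EReal) * J v)
    {x uMAP : E}
    (hMAP : ∀ v, J uMAP + (((1 / (2 * t)) * ‖x - uMAP‖ ^ 2 : ℝ) : EReal)
      ≤ J v + (((1 / (2 * t)) * ‖x - v‖ ^ 2 : ℝ) : EReal))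
    {φ : E → ℝ}
    (hφ : ∀ u, φ u = if J u = ⊤ then 0
      else Real.exp (-((J u).toReal + (1 / (2 * t)) * ‖x - u‖ ^ 2) / ε))
    (hφint : Integrable φ μ) (hφpos : 0 < ∫ u, φ u ∂μ) :
    ‖((∫ u, φ u ∂μ)⁻¹ • ∫ u, φ u • u ∂μ) - uMAP‖ ^ 2 ≤ finrank ℝ E * t * ε := by
  let q : E → ℝ := fun u => 1 / (2 * t) * ‖x - u‖ ^ 2
  have hmin : ∀ v, J uMAP + q uMAP ≤ J v + q v := hMAP
  obtain rfl : φ = gibbsWeight {u | J u ≠ ⊤} (fun u => (J u).toReal + q u) ε := by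
    ext u
    by_cases hu : J u = ⊤ <;> simp [hφ, gibbsWeight, q, hu]
  have hproper : ∃ v, J v ≠ ⊤ := by
    by_contra! htop
    simp [gibbsWeight, htop] at hφpos
  have hmem : J uMAP ≠ ⊤ := ne_top_of_forall_add_coe_le hmin hproper
  have hstrong : StrongConvexOn {u | J u ≠ ⊤} (1 / t) fun u => (J u).toReal + q u := by
    simpa only [q, one_div, mul_inv, div_eq_inv_mul, mul_one] using
      strongConvexOn_add_sq_norm_sub (convexOn_toReal hnobot hconv) (1 / t) x
  calc _ ≤ finrank ℝ E * (ε / (1 / t)) :=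
        sq_norm_gibbs_mean_sub_le hstrong (one_div_pos.2 ht) hε hmem
          (isMinOn_toReal_add hnobot hmin hmem) hφint hφpos
    _ = finrank ℝ E * t * ε := by field_simp

end PosteriorMean

/-- Distance bound between the posterior mean and the MAP estimator:
`‖u_PM - u_MAP‖² ≤ n t ε` for `J ∈ Γ₀(ℝⁿ)` with `int(dom J) ≠ ∅` and `inf J = 0`
(with the convention `e^{-∞} = 0` in the density). -/
theorem stmt16 (n : ℕ) (t ε : ℝ) (ht : 0 < t) (hε : 0 < ε)
    (J : EuclideanSpace ℝ (Fin n) → EReal)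
    (hproper : ∃ u, J u ≠ ⊤) (hnobot : ∀ u, J u ≠ ⊥)
    (hconv : ∀ u v : EuclideanSpace ℝ (Fin n), ∀ a b : ℝ, 0 ≤ a → 0 ≤ b → a + b = 1 →
      J (a • u + b • v) ≤ (a : EReal) * J u + (b : EReal) * J v)
    (hlsc : LowerSemicontinuous J)
    (hint : (interior {u : EuclideanSpace ℝ (Fin n) | J u ≠ ⊤}).Nonempty)
    (hinf : (⨅ u, J u) = 0)
    (x uMAP : EuclideanSpace ℝ (Fin n))
    (hMAP : ∀ v, J uMAP + (((1 / (2 * t)) * ‖x - uMAP‖ ^ 2 : ℝ) : EReal)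
      ≤ J v + (((1 / (2 * t)) * ‖x - v‖ ^ 2 : ℝ) : EReal))
    (φ : EuclideanSpace ℝ (Fin n) → ℝ)
    (hφ : ∀ u, φ u = if J u = ⊤ then 0
      else Real.exp (-((J u).toReal + (1 / (2 * t)) * ‖x - u‖ ^ 2) / ε))
    (hφint : Integrable φ)
    (hφvint : Integrable (fun u => φ u • u))
    (hφpos : 0 < ∫ u, φ u) :
    ‖((∫ u, φ u)⁻¹ • ∫ u, φ u • u) - uMAP‖ ^ 2 ≤ n * t * ε := by
  simpa only [finrank_euclideanSpace_fin] using
    stmt16_general ht hε hnobot hconv hMAP hφ hφint hφpos
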